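/- Suppose X ⊆ W is a block subspace, (y_0,y_1,…) is a block sequence in W, α < ω₁ and K ≥ 1. Assume that player II has a strategy in F^{ω·α}_X to play outcomes (x_0,…,x_k) satisfying (x_0,…,x_k) ∼_K (y_0,…,y_k). Then for any block sequence (z_n) of vectors in the span [y_n], II has a strategy in F^α_X to play outcomes (v_0,…,v_k) satisfying (v_0,…,v_k) ∼_K (z_0,…,z_k). -/

import Mathlib

open Filter Topology

namespace Rosendal

variable {𝒲 : Type} [NormedAddCommGroup 𝒲] [NormedSpace ℝ 𝒲]

/-- `(e n)` is a Schauder basis of the Banach space `𝒲`. -/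
def IsSchauderBasis (e : ℕ → 𝒲) : Prop :=
  ∀ x : 𝒲, ∃! a : ℕ → ℝ,
    Tendsto (fun N => ∑ i ∈ Finset.range N, a i • e i) atTop (𝓝 x)

/-- `x` is a linear combination of the vectors `b i`, `i ∈ s`. -/
def SuppIn (b : ℕ → 𝒲) (x : 𝒲) (s : Finset ℕ) : Prop :=
  ∃ a : ℕ → ℝ, x = ∑ i ∈ s, a i • b i

/-- `(x i)_{i<k} ∼_K (y i)_{i<k}`. -/
def SeqEquiv (K : ℝ) (k : ℕ) (x y : ℕ → 𝒲) : Prop :=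
  ∀ a : ℕ → ℝ,
    (1 / K) * ‖∑ i ∈ Finset.range k, a i • x i‖ ≤ ‖∑ i ∈ Finset.range k, a i • y i‖ ∧
    ‖∑ i ∈ Finset.range k, a i • y i‖ ≤ K * ‖∑ i ∈ Finset.range k, a i • x i‖

/-- The outcome `l = (x 0, …, x k)` satisfies `(x 0, …, x k) ∼_K (y 0, …, y k)`. -/
def OutcomeEquiv (K : ℝ) (l : List 𝒲) (y : ℕ → 𝒲) : Prop :=
  SeqEquiv K l.length (fun i => l.getD i 0) y

/-- The outcome `l = (u 0, v 0, u 1, v 1, …, u k, v k)` satisfies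
`(u 0, …, u k) ∼_K (v 0, …, v k)`. -/
def PairOutcomeEquiv (K : ℝ) (l : List 𝒲) : Prop :=
  SeqEquiv K (l.length / 2) (fun i => l.getD (2 * i) 0) (fun i => l.getD (2 * i + 1) 0)

/-- The tree `T((x n), Y, K)`. -/
def embTree (x : ℕ → 𝒲) (Y : Set 𝒲) (K : ℝ) : Set (List 𝒲) :=
  {l | (∀ v ∈ l, v ∈ Y) ∧ SeqEquiv K l.length (fun i => l.getD i 0) x}

open Classical in
/-- The rank of a tree of finite sequences; `⊤ = ∞` if it is ill-founded. -/
noncomputable def treeRank (T : Set (List 𝒲)) : WithTop Ordinal :=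
  if h : WellFounded (fun t s : T => s.val <+: t.val ∧ s.val ≠ t.val) then
    ((⨆ s : T, Order.succ ((h.apply s).rank) : Ordinal) : WithTop Ordinal)
  else ⊤

open Classical in
/-- The embeddability index `Emb((x n), Y) = sup_{K ≥ 1} rank T((x n), Y, K)`. -/
noncomputable def embIndex (x : ℕ → 𝒲) (Y : Set 𝒲) : WithTop Ordinal :=
  if ∃ K : ℝ, 1 ≤ K ∧ treeRank (embTree x Y K) = ⊤ then ⊤
  else ((sSup {o : Ordinal | ∃ K : ℝ, 1 ≤ K ∧
      (o : WithTop Ordinal) = treeRank (embTree x Y K)} : Ordinal) : WithTop Ordinal)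

/-- `(I m)` is a sequence of successive nonempty finite intervals `I 0 < I 1 < …` of `ℕ`. -/
def IntervalSeq (I : ℕ → Finset ℕ) : Prop :=
  (∀ m, ∃ a b : ℕ, a ≤ b ∧ I m = Finset.Icc a b) ∧
  ∀ m, ∀ i ∈ I m, ∀ j ∈ I (m + 1), i < j

/-- The setting of Section 2 of the paper: a Banach space `𝒲` with a Schauder basis
`(e n)`, a countable subfield `𝔽 ⊆ ℝ` closed under the norms of finite `𝔽`-linear
combinations of the basis, and the countable `𝔽`-vector space `W` spanned by `(e n)`. -/
structure Frame (𝒲 : Type) [NormedAddCommGroup 𝒲] [NormedSpace ℝ 𝒲] : Type where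
  e : ℕ → 𝒲
  complete : CompleteSpace 𝒲
  basis : IsSchauderBasis e
  𝔽 : Subfield ℝ
  countable : (𝔽 : Set ℝ).Countable
  norm_mem : ∀ (s : Finset ℕ) (a : ℕ → ℝ), (∀ i ∈ s, a i ∈ 𝔽) →
    ‖∑ i ∈ s, a i • e i‖ ∈ 𝔽

namespace Frame

variable {𝒲 : Type} [NormedAddCommGroup 𝒲] [NormedSpace ℝ 𝒲] (ctx : Frame 𝒲)

/-- The `𝔽`-linear span of a set of vectors. -/
def fspan (S : Set 𝒲) : Set 𝒲 :=
  {v | ∃ t : Finset 𝒲, ↑t ⊆ S ∧ ∃ c : 𝒲 → ℝ, (∀ w, c w ∈ ctx.𝔽) ∧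
    v = ∑ w ∈ t, c w • w}

/-- The countable `𝔽`-vector space `W` with basis `(e n)`. -/
def W : Set 𝒲 := ctx.fspan (Set.range ctx.e)

/-- `(y n)` is a block sequence with respect to the reference block basis `(b n)`:
a sequence of nonzero vectors of the `𝔽`-span of `(b n)` with successive supports. -/
def BlockSeqRel (b y : ℕ → 𝒲) : Prop :=
  (∀ n, y n ∈ ctx.fspan (Set.range b)) ∧ (∀ n, y n ≠ 0) ∧
  ∃ D : ℕ → Finset ℕ, (∀ n, SuppIn b (y n) (D n)) ∧
    ∀ n, ∀ i ∈ D n, ∀ j ∈ D (n + 1), i < j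

/-- `(y n)` is a block sequence (with respect to the basis `(e n)` of `W`). -/
def IsBlockSeq (y : ℕ → 𝒲) : Prop := ctx.BlockSeqRel ctx.e y

/-- `Y` is a block subspace of `X`: the `𝔽`-span of an infinite block sequence of
vectors of `X`. -/
def IsBlockSubspaceOf (Y X : Set 𝒲) : Prop :=
  ∃ y : ℕ → 𝒲, ctx.IsBlockSeq y ∧ (∀ n, y n ∈ X) ∧ Y = ctx.fspan (Set.range y)

/-- `Y` is a block subspace of `W`. -/
def IsBlockSubspace (Y : Set 𝒲) : Prop := ctx.IsBlockSubspaceOf Y ctx.W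

/-- `F` is a finite-dimensional `𝔽`-subspace of `X`. -/
def IsFinDimIn (F X : Set 𝒲) : Prop :=
  ∃ t : Finset 𝒲, ↑t ⊆ X ∧ F = ctx.fspan ↑t

/-- `n < F`: every vector of `F` is supported on basis vectors of index `> n`. -/
def NatLt (n : ℕ) (F : Set 𝒲) : Prop :=
  ∀ x ∈ F, ∃ s : Finset ℕ, SuppIn ctx.e x s ∧ ∀ i ∈ s, n < i

/-- `V` is an `𝔽`-subspace of `𝒲`. -/
def IsSubspace (V : Set 𝒲) : Prop :=
  (0 : 𝒲) ∈ V ∧ (∀ u v : 𝒲, u ∈ V → v ∈ V → u + v ∈ V) ∧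
    ∀ c : ℝ, c ∈ ctx.𝔽 → ∀ v ∈ V, c • v ∈ V

/-- `V` is infinite-dimensional (not contained in a finitely generated subspace). -/
def IsInfDim (V : Set 𝒲) : Prop :=
  ¬∃ t : Finset 𝒲, V ⊆ ctx.fspan ↑t

/-- Game values of the asymptotic game `F^β_X`, for player II, computed by transfinite
recursion on the ordinal bound.  `IIWinsF X S β Facc vec` states: in the asymptotic game
below `X`, from a position where the vectors `vec` have been played and the
finite-dimensional subspaces played by II span `Facc`, and where I must now play a natural
number together with an ordinal `< β`, player II has a strategy so that the final outcome
lies in `S`. -/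
noncomputable def IIWinsF (X : Set 𝒲) (S : Set (List 𝒲)) :
    Ordinal → Set 𝒲 → List 𝒲 → Prop :=
  WellFounded.fix (C := fun _ : Ordinal => Set 𝒲 → List 𝒲 → Prop) Ordinal.lt_wf
    (fun β ih Facc vec =>
      ∀ n : ℕ, ∀ ξ : Ordinal, ∀ hξ : ξ < β,
        ∃ F : Set 𝒲, ctx.IsFinDimIn F X ∧ ctx.NatLt n F ∧
          ∃ x : 𝒲, x ≠ 0 ∧ x ∈ ctx.fspan (Facc ∪ F) ∧
            (ξ = 0 → vec ++ [x] ∈ S) ∧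
            (ξ ≠ 0 → ih ξ hξ (ctx.fspan (Facc ∪ F)) (vec ++ [x])))

/-- Player II has a strategy in the asymptotic game `F^β_X` to play an outcome in `S`. -/
noncomputable def IIStratF (X : Set 𝒲) (β : Ordinal) (S : Set (List 𝒲)) : Prop :=
  (β = 0 → ([] : List 𝒲) ∈ S) ∧ (β ≠ 0 → ctx.IIWinsF X S β (ctx.fspan ∅) [])

/-- Game values of the asymptotic game `F^β_X` for player I (who plays the integers and
the ordinals, trying to steer the outcome into `S`). -/
noncomputable def IWinsF (X : Set 𝒲) (S : Set (List 𝒲)) :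
    Ordinal → Set 𝒲 → List 𝒲 → Prop :=
  WellFounded.fix (C := fun _ : Ordinal => Set 𝒲 → List 𝒲 → Prop) Ordinal.lt_wf
    (fun β ih Facc vec =>
      ∃ n : ℕ, ∃ ξ : Ordinal, ∃ hξ : ξ < β,
        ∀ F : Set 𝒲, ctx.IsFinDimIn F X → ctx.NatLt n F →
        ∀ x : 𝒲, x ≠ 0 → x ∈ ctx.fspan (Facc ∪ F) →
          (ξ = 0 → vec ++ [x] ∈ S) ∧
          (ξ ≠ 0 → ih ξ hξ (ctx.fspan (Facc ∪ F)) (vec ++ [x])))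

/-- Player I has a strategy in the asymptotic game `F^β_X` to play an outcome in `S`. -/
noncomputable def IStratF (X : Set 𝒲) (β : Ordinal) (S : Set (List 𝒲)) : Prop :=
  (β = 0 → ([] : List 𝒲) ∈ S) ∧ (β ≠ 0 → ctx.IWinsF X S β (ctx.fspan ∅) [])

/-- Game values of the Gowers game `G^α_X` for player II. -/
noncomputable def IIWinsG (X : Set 𝒲) (S : Set (List 𝒲)) :
    Ordinal → Set 𝒲 → List 𝒲 → Prop :=
  WellFounded.fix (C := fun _ : Ordinal => Set 𝒲 → List 𝒲 → Prop) Ordinal.lt_wf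
    (fun α ih Facc vec =>
      ∀ Y : Set 𝒲, ctx.IsBlockSubspaceOf Y X →
      ∀ ξ : Ordinal, ∀ hξ : ξ < α,
        ∃ F : Set 𝒲, ctx.IsFinDimIn F Y ∧
          ∃ x : 𝒲, x ≠ 0 ∧ x ∈ ctx.fspan (Facc ∪ F) ∧
            (ξ = 0 → vec ++ [x] ∈ S) ∧
            (ξ ≠ 0 → ih ξ hξ (ctx.fspan (Facc ∪ F)) (vec ++ [x])))

/-- Player II has a strategy in the generalised Gowers game `G^α_X` to play in `S`. -/
noncomputable def IIStratG (X : Set 𝒲) (α : Ordinal) (S : Set (List 𝒲)) : Prop :=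
  (α = 0 → ([] : List 𝒲) ∈ S) ∧ (α ≠ 0 → ctx.IIWinsG X S α (ctx.fspan ∅) [])

/-- Game values of the adversarial game `A^α_X` for player II (who plays the integers,
the finite-dimensional subspaces `F_l ⊆ Y_l` and the vectors `y_l`). -/
noncomputable def IIWinsA (X : Set 𝒲) (S : Set (List 𝒲)) :
    Ordinal → Set 𝒲 → Set 𝒲 → List 𝒲 → Prop :=
  WellFounded.fix (C := fun _ : Ordinal => Set 𝒲 → Set 𝒲 → List 𝒲 → Prop)
    Ordinal.lt_wf
    (fun α ih Eacc Facc vec =>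
      ∃ n : ℕ,
        ∀ E : Set 𝒲, ctx.IsFinDimIn E X → ctx.NatLt n E →
        ∀ x : 𝒲, x ≠ 0 → x ∈ ctx.fspan (Eacc ∪ E) →
        ∀ Y : Set 𝒲, ctx.IsBlockSubspaceOf Y X →
        ∀ ξ : Ordinal, ∀ hξ : ξ < α,
          ∃ F : Set 𝒲, ctx.IsFinDimIn F Y ∧
            ∃ y : 𝒲, y ≠ 0 ∧ y ∈ ctx.fspan (Facc ∪ F) ∧
              (ξ = 0 → vec ++ [x, y] ∈ S) ∧
              (ξ ≠ 0 → ih ξ hξ (ctx.fspan (Eacc ∪ E)) (ctx.fspan (Facc ∪ F))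
                (vec ++ [x, y])))

/-- Player II has a strategy in the adversarial game `A^α_X` to play in `S`. -/
noncomputable def IIStratA (X : Set 𝒲) (α : Ordinal) (S : Set (List 𝒲)) : Prop :=
  (α = 0 → ([] : List 𝒲) ∈ S) ∧
  (α ≠ 0 → ctx.IIWinsA X S α (ctx.fspan ∅) (ctx.fspan ∅) [])

/-- Game values of the adversarial game `B^α_X` for player I (who plays the
finite-dimensional subspaces `E_l ⊆ Y_l`, the vectors `x_l`, the integers and the
ordinals). -/
noncomputable def IWinsB (X : Set 𝒲) (S : Set (List 𝒲)) :
    Ordinal → Set 𝒲 → Set 𝒲 → List 𝒲 → Prop :=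
  WellFounded.fix (C := fun _ : Ordinal => Set 𝒲 → Set 𝒲 → List 𝒲 → Prop)
    Ordinal.lt_wf
    (fun α ih Eacc Facc vec =>
      ∀ Y : Set 𝒲, ctx.IsBlockSubspaceOf Y X →
        ∃ E : Set 𝒲, ctx.IsFinDimIn E Y ∧
          ∃ x : 𝒲, x ≠ 0 ∧ x ∈ ctx.fspan (Eacc ∪ E) ∧
            ∃ n : ℕ, ∃ ξ : Ordinal, ∃ hξ : ξ < α,
              ∀ F : Set 𝒲, ctx.IsFinDimIn F X → ctx.NatLt n F →
              ∀ y : 𝒲, y ≠ 0 → y ∈ ctx.fspan (Facc ∪ F) →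
                (ξ = 0 → vec ++ [x, y] ∈ S) ∧
                (ξ ≠ 0 → ih ξ hξ (ctx.fspan (Eacc ∪ E)) (ctx.fspan (Facc ∪ F))
                  (vec ++ [x, y])))

/-- Player I has a strategy in the adversarial game `B^α_X` to play in `S`. -/
noncomputable def IStratB (X : Set 𝒲) (α : Ordinal) (S : Set (List 𝒲)) : Prop :=
  (α = 0 → ([] : List 𝒲) ∈ S) ∧
  (α ≠ 0 → ctx.IWinsB X S α (ctx.fspan ∅) (ctx.fspan ∅) [])

/-- Game values of the adversarial game `B^α_X` for player II (who plays the block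
subspaces `Y_l`, the finite-dimensional subspaces `F_l` and the vectors `y_l`). -/
noncomputable def IIWinsB (X : Set 𝒲) (S : Set (List 𝒲)) :
    Ordinal → Set 𝒲 → Set 𝒲 → List 𝒲 → Prop :=
  WellFounded.fix (C := fun _ : Ordinal => Set 𝒲 → Set 𝒲 → List 𝒲 → Prop)
    Ordinal.lt_wf
    (fun α ih Eacc Facc vec =>
      ∃ Y : Set 𝒲, ctx.IsBlockSubspaceOf Y X ∧
        ∀ E : Set 𝒲, ctx.IsFinDimIn E Y →
        ∀ x : 𝒲, x ≠ 0 → x ∈ ctx.fspan (Eacc ∪ E) →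
        ∀ n : ℕ, ∀ ξ : Ordinal, ∀ hξ : ξ < α,
          ∃ F : Set 𝒲, ctx.IsFinDimIn F X ∧ ctx.NatLt n F ∧
            ∃ y : 𝒲, y ≠ 0 ∧ y ∈ ctx.fspan (Facc ∪ F) ∧
              (ξ = 0 → vec ++ [x, y] ∈ S) ∧
              (ξ ≠ 0 → ih ξ hξ (ctx.fspan (Eacc ∪ E)) (ctx.fspan (Facc ∪ F))
                (vec ++ [x, y])))

/-- Player II has a strategy in the adversarial game `B^α_X` to play in `S`. -/
noncomputable def IIStratB (X : Set 𝒲) (α : Ordinal) (S : Set (List 𝒲)) : Prop :=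
  (α = 0 → ([] : List 𝒲) ∈ S) ∧
  (α ≠ 0 → ctx.IIWinsB X S α (ctx.fspan ∅) (ctx.fspan ∅) [])

end Frame

end Rosendal

namespace Rosendal

namespace Frame

section helpers

variable {𝒲 : Type} [NormedAddCommGroup 𝒲] [NormedSpace ℝ 𝒲] (ctx : Frame 𝒲)

theorem fspan_eq (S : Set 𝒲) : ctx.fspan S = (Submodule.span ctx.𝔽 S : Set 𝒲) := by
  ext v
  constructor
  · rintro ⟨t, ht, c, hc, rfl⟩
    refine Submodule.sum_mem _ fun w hw => ?_
    exact Submodule.smul_mem _ (⟨c w, hc w⟩ : ctx.𝔽) (Submodule.subset_span (ht hw))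
  · intro hv
    obtain ⟨f, t, hts, -, h2⟩ := Submodule.mem_span_iff_exists_finset_subset.1 hv
    exact ⟨t, hts, fun w => (f w : ℝ), fun w => (f w).2, h2.symm⟩

theorem subset_fspan (S : Set 𝒲) : S ⊆ ctx.fspan S := by
  rw [fspan_eq]; exact Submodule.subset_span

theorem fspan_subset {S T : Set 𝒲} (h : S ⊆ ctx.fspan T) : ctx.fspan S ⊆ ctx.fspan T := by
  rw [fspan_eq, fspan_eq] at *
  exact Submodule.span_le.2 h

theorem fspan_mono {S T : Set 𝒲} (h : S ⊆ T) : ctx.fspan S ⊆ ctx.fspan T :=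
  ctx.fspan_subset (h.trans (ctx.subset_fspan T))

theorem sum_mem_fspan {S : Set 𝒲} (t : Finset ℕ) (c : ℕ → ℝ) (hc : ∀ i, c i ∈ ctx.𝔽)
    (f : ℕ → 𝒲) (hf : ∀ i ∈ t, f i ∈ ctx.fspan S) : ∑ i ∈ t, c i • f i ∈ ctx.fspan S := by
  rw [fspan_eq] at *
  refine Submodule.sum_mem _ fun w hw => ?_
  exact Submodule.smul_mem _ (⟨c w, hc w⟩ : ctx.𝔽) (hf w hw)

theorem natLt_union {n : ℕ} {F G : Set 𝒲} (hF : ctx.NatLt n F) (hG : ctx.NatLt n G) :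
    ctx.NatLt n (ctx.fspan (F ∪ G)) := by
  intro x hx
  rw [fspan_eq] at hx
  induction hx using Submodule.span_induction with
  | mem x h =>
    rcases h with h | h
    · exact hF x h
    · exact hG x h
  | zero => exact ⟨∅, ⟨fun _ => 0, by simp⟩, by simp⟩
  | add x y _ _ hx hy =>
    classical
    obtain ⟨s, ⟨a, rfl⟩, hs⟩ := hx
    obtain ⟨t, ⟨b, rfl⟩, ht⟩ := hy
    refine ⟨s ∪ t, ⟨fun i => (if i ∈ s then a i else 0) + (if i ∈ t then b i else 0), ?_⟩, ?_⟩
    · simp only [add_smul, Finset.sum_add_distrib, ite_smul, zero_smul]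
      rw [Finset.sum_ite_mem, Finset.sum_ite_mem, Finset.inter_eq_right.2 Finset.subset_union_left,
        Finset.inter_eq_right.2 Finset.subset_union_right]
    · intro i hi
      rcases Finset.mem_union.1 hi with h | h
      · exact hs i h
      · exact ht i h
  | smul c x _ hx =>
    obtain ⟨s, ⟨a, rfl⟩, hs⟩ := hx
    refine ⟨s, ⟨fun i => (c : ℝ) * a i, ?_⟩, hs⟩
    simp only [mul_smul, Finset.smul_sum]
    rfl

theorem isFinDimIn_union {X F G : Set 𝒲} (hF : ctx.IsFinDimIn F X) (hG : ctx.IsFinDimIn G X) :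
    ctx.IsFinDimIn (ctx.fspan (F ∪ G)) X := by
  classical
  obtain ⟨s, hs, rfl⟩ := hF
  obtain ⟨t, ht, rfl⟩ := hG
  refine ⟨s ∪ t, by simp [hs, ht], ?_⟩
  rw [Finset.coe_union]
  apply Set.Subset.antisymm
  · apply ctx.fspan_subset
    exact Set.union_subset (ctx.fspan_mono Set.subset_union_left)
      (ctx.fspan_mono Set.subset_union_right)
  · exact ctx.fspan_mono (Set.union_subset_union (ctx.subset_fspan _) (ctx.subset_fspan _))

theorem iiWinsF_iff (X : Set 𝒲) (S : Set (List 𝒲)) (β : Ordinal) (Facc : Set 𝒲)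
    (vec : List 𝒲) : ctx.IIWinsF X S β Facc vec ↔
      ∀ n : ℕ, ∀ ξ : Ordinal, ξ < β →
        ∃ F : Set 𝒲, ctx.IsFinDimIn F X ∧ ctx.NatLt n F ∧
          ∃ x : 𝒲, x ≠ 0 ∧ x ∈ ctx.fspan (Facc ∪ F) ∧
            (ξ = 0 → vec ++ [x] ∈ S) ∧
            (ξ ≠ 0 → ctx.IIWinsF X S ξ (ctx.fspan (Facc ∪ F)) (vec ++ [x])) := by
  unfold IIWinsF
  rw [WellFounded.fix_eq]

theorem iiWinsF_mono {X : Set 𝒲} {S : Set (List 𝒲)} {β β' : Ordinal} (hβ : β' ≤ β)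
    {Facc : Set 𝒲} {vec : List 𝒲} (h : ctx.IIWinsF X S β Facc vec) :
    ctx.IIWinsF X S β' Facc vec := by
  rw [iiWinsF_iff] at *
  exact fun n ξ hξ => h n ξ (hξ.trans_le hβ)

theorem inner {X : Set 𝒲} {S : Set (List 𝒲)} (γ : Ordinal) (n : ℕ) (j : ℕ) :
    ∀ (G : Set 𝒲) (vec : List 𝒲), ctx.IIWinsF X S (γ + (j + 1 : ℕ)) G vec →
    ∃ F : Set 𝒲, ctx.IsFinDimIn F X ∧ ctx.NatLt n F ∧ ∃ xs : List 𝒲, xs.length = j + 1 ∧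
      (∀ x ∈ xs, x ∈ ctx.fspan (G ∪ F)) ∧ ∃ G' ⊆ ctx.fspan (G ∪ F),
      (γ = 0 → vec ++ xs ∈ S) ∧ (γ ≠ 0 → ctx.IIWinsF X S γ G' (vec ++ xs)) := by
  induction j with
  | zero =>
    intro G vec h
    rw [iiWinsF_iff] at h
    obtain ⟨F, hF, hn, x, hx0, hx, h1, h2⟩ := h n γ (by simp)
    exact ⟨F, hF, hn, [x], rfl, by simpa using hx, _, subset_rfl, h1, h2⟩
  | succ j ih =>
    intro G vec h
    rw [iiWinsF_iff] at h
    obtain ⟨F, hF, hn, x, hx0, hx, -, h2⟩ := h n (γ + (j + 1 : ℕ))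
      ((add_lt_add_iff_left γ).2 (by exact_mod_cast Nat.lt_succ_self (j + 1)))
    have h3 := h2 (by
      intro h0
      have : (0 : Ordinal) < γ + (j + 1 : ℕ) :=
        lt_of_lt_of_le (by exact_mod_cast Nat.succ_pos j) le_add_self
      exact this.ne' h0)
    obtain ⟨F', hF', hn', xs, hl, hxs, G', hG', h4, h5⟩ := ih _ _ h3
    have hsub1 : ctx.fspan (G ∪ F) ⊆ ctx.fspan (G ∪ ctx.fspan (F ∪ F')) :=
      ctx.fspan_mono (Set.union_subset_union_right _
        (Set.subset_union_left.trans (ctx.subset_fspan _)))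
    have hsub : ctx.fspan (ctx.fspan (G ∪ F) ∪ F') ⊆ ctx.fspan (G ∪ ctx.fspan (F ∪ F')) := by
      apply ctx.fspan_subset
      refine Set.union_subset hsub1 ?_
      exact (Set.subset_union_right.trans (ctx.subset_fspan (F ∪ F'))).trans
        (Set.subset_union_right.trans (ctx.subset_fspan _))
    refine ⟨ctx.fspan (F ∪ F'), ctx.isFinDimIn_union hF hF', ctx.natLt_union hn hn',
      x :: xs, by simp [hl], ?_, G', hG'.trans hsub, ?_, ?_⟩
    · intro w hw
      rcases List.mem_cons.1 hw with rfl | hw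
      · exact hsub1 hx
      · exact hsub (hxs w hw)
    · simpa using h4
    · simpa using h5

theorem seqEquiv_mono {K : ℝ} {k k' : ℕ} (hk : k ≤ k') {x x' y : ℕ → 𝒲}
    (hx : ∀ i < k, x i = x' i) (h : SeqEquiv K k' x' y) : SeqEquiv K k x y := by
  intro a
  have key : ∀ f g : ℕ → 𝒲, (∀ i < k, f i = g i) → ∑ i ∈ Finset.range k, a i • f i =
      ∑ i ∈ Finset.range k', (if i < k then a i else 0) • g i := by
    intro f g hfg
    rw [← Finset.sum_subset (Finset.range_subset_range.2 hk)]
    · refine Finset.sum_congr rfl fun i hi => ?_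
      have := Finset.mem_range.1 hi
      rw [if_pos this, hfg i this]
    · intro i _ hi
      rw [if_neg (by simpa using hi), zero_smul]
  rw [key x x' hx, key y y fun _ _ => rfl]
  exact h _

theorem equiv_of_wins {X : Set 𝒲} {y : ℕ → 𝒲} {K : ℝ} {β : Ordinal} (hβ : β ≠ 0)
    {G : Set 𝒲} {vec : List 𝒲} (h : ctx.IIWinsF X {l | OutcomeEquiv K l y} β G vec) :
    OutcomeEquiv K vec y := by
  rw [iiWinsF_iff] at h
  obtain ⟨F, -, -, x, -, -, h1, -⟩ := h 0 0 (pos_iff_ne_zero.2 hβ)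
  have := h1 rfl
  refine seqEquiv_mono (k' := (vec ++ [x]).length) (by simp) ?_ this
  intro i hi
  exact (List.getD_append _ _ _ _ hi).symm

theorem coeffs {y : ℕ → 𝒲} {v : 𝒲} (hv : v ∈ ctx.fspan (Set.range y)) :
    ∃ (N : ℕ) (c : ℕ → ℝ), (∀ i, c i ∈ ctx.𝔽) ∧ (∀ i, N ≤ i → c i = 0) ∧
      v = ∑ i ∈ Finset.range N, c i • y i := by
  rw [fspan_eq] at hv
  obtain ⟨c, hc⟩ := Finsupp.mem_span_range_iff_exists_finsupp.1 hv
  refine ⟨c.support.sup id + 1, fun i => (c i : ℝ), fun i => (c i).2, ?_, ?_⟩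
  · intro i hi
    by_contra hne
    have : i ∈ c.support := by
      rw [Finsupp.mem_support_iff]; intro h0; exact hne (by simp [h0])
    have := Finset.le_sup (f := id) this
    simp only [id] at this
    omega
  · rw [← hc, Finsupp.sum]
    apply Finset.sum_subset
    · intro i hi
      have := Finset.le_sup (f := id) hi
      simp only [id] at this
      exact Finset.mem_range.2 (by omega)
    · intro i _ hi
      rw [Finsupp.notMem_support_iff.1 hi, zero_smul]

/-- The vector with coefficients `c` over `f`. -/
noncomputable def comb (N : ℕ → ℕ) (c : ℕ → ℕ → ℝ) (f : ℕ → 𝒲) (l : ℕ) : 𝒲 :=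
  ∑ i ∈ Finset.range (N l), c l i • f i

theorem comb_eq {N : ℕ → ℕ} {c : ℕ → ℕ → ℝ} (h0 : ∀ l i, N l ≤ i → c l i = 0)
    (f : ℕ → 𝒲) (l : ℕ) {L : ℕ} (hL : N l ≤ L) :
    comb N c f l = ∑ i ∈ Finset.range L, c l i • f i := by
  apply Finset.sum_subset (Finset.range_subset_range.2 hL)
  intro i _ hi
  rw [h0 l i (by simpa using hi), zero_smul]

theorem comb_seqEquiv {N : ℕ → ℕ} {c : ℕ → ℕ → ℝ} (h0 : ∀ l i, N l ≤ i → c l i = 0)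
    {K : ℝ} {x y : ℕ → 𝒲} {m L : ℕ} (hL : ∀ l < m, N l ≤ L) (h : SeqEquiv K L x y) :
    SeqEquiv K m (comb N c x) (comb N c y) := by
  intro b
  have key : ∀ f : ℕ → 𝒲, ∑ l ∈ Finset.range m, b l • comb N c f l =
      ∑ i ∈ Finset.range L, (∑ l ∈ Finset.range m, b l * c l i) • f i := by
    intro f
    simp only [Finset.sum_smul]
    rw [Finset.sum_comm]
    refine Finset.sum_congr rfl fun l hl => ?_
    rw [comb_eq h0 f l (hL l (Finset.mem_range.1 hl)), Finset.smul_sum]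
    exact Finset.sum_congr rfl fun i _ => (mul_smul _ _ _).symm
  rw [key, key]
  exact h _

theorem main_aux {X : Set 𝒲} {y z : ℕ → 𝒲} {K : ℝ} (hK : 1 ≤ K)
    {N M : ℕ → ℕ} {c : ℕ → ℕ → ℝ}
    (hc : ∀ l i, c l i ∈ ctx.𝔽) (h0 : ∀ l i, N l ≤ i → c l i = 0)
    (hz : z = comb N c y) (hz0 : ∀ l, z l ≠ 0) (hM : ∀ l, M (l + 1) = M l + (N l + 1))
    (β : Ordinal) : ∀ (m : ℕ) (G Facc : Set 𝒲) (vec vr : List 𝒲),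
      ctx.IIWinsF X {l | OutcomeEquiv K l y} (Ordinal.omega0 * β) G vec →
      G ⊆ Facc → (∀ x ∈ vec, x ∈ Facc) → vec.length = M m →
      vr = (List.range m).map (comb N c (fun i => vec.getD i 0)) →
      ctx.IIWinsF X {l | OutcomeEquiv K l z} β Facc vr := by
  induction β using WellFoundedLT.induction with
  | ind β ih =>
  intro m G Facc vec vr h hG hvec hlen hvr
  rw [iiWinsF_iff]
  intro n ξ hξ
  have hNM : ∀ l k, l < k → N l ≤ M k := by
    intro l k hlk
    induction k with
    | zero => omega
    | succ k ihk =>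
      rw [hM]
      rcases Nat.lt_succ_iff_lt_or_eq.1 hlk with h | rfl
      · have := ihk h; omega
      · omega
  have hle : Ordinal.omega0 * ξ + (N m + 1 : ℕ) ≤ Ordinal.omega0 * β := by
    calc Ordinal.omega0 * ξ + (N m + 1 : ℕ) ≤ Ordinal.omega0 * ξ + Ordinal.omega0 := by
          gcongr; exact (Ordinal.nat_lt_omega0 _).le
      _ = Ordinal.omega0 * (Order.succ ξ) := (Ordinal.mul_succ _ _).symm
      _ ≤ _ := by gcongr; exact Order.succ_le_of_lt hξ
  obtain ⟨F, hF, hn, xs, hxl, hxs, G', hG', h1, h2⟩ :=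
    ctx.inner (Ordinal.omega0 * ξ) n (N m) G vec (ctx.iiWinsF_mono hle h)
  have hEq : OutcomeEquiv K (vec ++ xs) y := by
    by_cases hγ : Ordinal.omega0 * ξ = 0
    · exact h1 hγ
    · exact ctx.equiv_of_wins hγ (h2 hγ)
  have hlen' : (vec ++ xs).length = M (m + 1) := by
    rw [List.length_append, hlen, hxl, hM]
  set x : ℕ → 𝒲 := fun i => (vec ++ xs).getD i 0 with hx
  have hsub : ctx.fspan (G ∪ F) ⊆ ctx.fspan (Facc ∪ F) :=
    ctx.fspan_mono (Set.union_subset_union_left _ hG)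
  have hmem : ∀ w ∈ vec ++ xs, w ∈ ctx.fspan (Facc ∪ F) := by
    intro w hw
    rcases List.mem_append.1 hw with hw | hw
    · exact ctx.subset_fspan _ (Or.inl (hvec w hw))
    · exact hsub (hxs w hw)
  have hvr' : vr ++ [comb N c x m] = (List.range (m + 1)).map (comb N c x) := by
    rw [List.range_succ, List.map_append, hvr]
    congr 1
    apply List.map_congr_left
    intro l hl
    refine Finset.sum_congr rfl fun i hi => ?_
    have hi' : i < vec.length := by
      rw [hlen]; exact (Finset.mem_range.1 hi).trans_le (hNM l m (List.mem_range.1 hl))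
    rw [hx]
    simp only
    rw [List.getD_append _ _ _ _ hi']
  have hseq : SeqEquiv K (m + 1) (comb N c x) z := by
    rw [hz]
    refine comb_seqEquiv h0 (fun l hl => hNM l (m + 1) hl) ?_
    rw [← hlen']
    exact hEq
  refine ⟨F, hF, hn, comb N c x m, ?_, ?_, ?_, ?_⟩
  · intro hzero
    have := (hseq (fun i => if i = m then 1 else 0)).2
    simp [ite_smul, hzero, hz0 m] at this
  · refine ctx.sum_mem_fspan _ _ (hc m) _ fun i hi => hmem _ ?_
    have hi' : i < (vec ++ xs).length := by
      rw [hlen']; exact (Finset.mem_range.1 hi).trans_le (hNM m (m + 1) (Nat.lt_succ_self m))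
    rw [hx]
    simp only
    rw [List.getD_eq_getElem _ _ hi']
    exact List.getElem_mem _
  · intro _
    rw [hvr']
    show SeqEquiv K _ _ _
    refine seqEquiv_mono (k' := m + 1) (by simp) ?_ hseq
    intro i hi
    have hi' : i < m + 1 := by simpa using hi
    rw [List.getD_eq_getElem _ _ hi]
    simp
  · intro hξ0
    refine ih ξ hξ (m + 1) G' _ (vec ++ xs) _ (h2 ?_) (hG'.trans hsub) hmem hlen' hvr'
    exact mul_ne_zero Ordinal.omega0_ne_zero hξ0

end helpers

end Frame

/-- If II has a strategy in `F^{ω·α}_X` to play outcomes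
`K`-equivalent to the block sequence `(y n)` in `W`, then for any block sequence `(z n)`
of vectors in the span `[y n]`, II has a strategy in `F^α_X` to play outcomes
`K`-equivalent to `(z n)`. -/
theorem passing_to_block_sequences
    (𝒲 : Type) [NormedAddCommGroup 𝒲] [NormedSpace ℝ 𝒲] (ctx : Frame 𝒲)
    (X : Set 𝒲) (hX : ctx.IsBlockSubspace X)
    (y : ℕ → 𝒲) (hy : ctx.IsBlockSeq y)
    (α : Ordinal) (hα : α < (Cardinal.aleph 1).ord) (K : ℝ) (hK : 1 ≤ K)
    (h : ctx.IIStratF X (Ordinal.omega0 * α) {l | OutcomeEquiv K l y}) :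
    ∀ z : ℕ → 𝒲, ctx.IsBlockSeq z → (∀ n, z n ∈ ctx.fspan (Set.range y)) →
      ctx.IIStratF X α {l | OutcomeEquiv K l z} := by
  intro z hzb hzy
  choose N c hc h0 hz using fun n => ctx.coeffs (hzy n)
  refine ⟨fun _ => ?_, fun hα0 => ?_⟩
  · intro a
    simp
  · have hw := h.2 (mul_ne_zero Ordinal.omega0_ne_zero hα0)
    refine ctx.main_aux hK (M := fun k => Nat.rec 0 (fun l r => r + (N l + 1)) k) hc h0
      (funext hz) hzb.2.1 (fun _ => rfl) α 0 _ _ [] [] hw subset_rfl (by simp) rfl rfl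

end Rosendal
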